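/- arXiv:2001.02226 — 2 statements merged into one kernel-verified Lean document; each statement's English description precedes it below -/
import Mathlib

section
/- Let ν ≥ 1, let N ⊆ ℝ^ν be a compact connected smooth embedded submanifold without boundary with base point b ∈ N, let ℓ ≥ 1, and let p > ℓ + 1 be a real number. Let (w_j)_{j∈ℕ} be a sequence of continuous maps w_j : B̄^ℓ → N with w_j = b on S^{ℓ−1}, such that for all j ≠ k the maps w_j and w_k are not homotopic relative to S^{ℓ−1}. Then E^{1−1/p, p}_{B^ℓ}(w_j) → ∞ as j → ∞, i.e., for every M > 0 one has E^{1−1/p, p}_{B^ℓ}(w_j) ≥ M for all but finitely many j. -/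
open Metric Set MeasureTheory Filter
open scoped ENNReal Topology

noncomputable section

/-- `N ⊆ ℝ^ν` is a smooth embedded submanifold without boundary: around each of its points
there is a smooth local diffeomorphism of the ambient space flattening `N` onto a
`d`-dimensional coordinate subspace. -/
def IsSmoothSubmanifold {ν : ℕ} (N : Set (EuclideanSpace ℝ (Fin ν))) : Prop :=
  ∃ d : ℕ, ∀ x ∈ N, ∃ (U V : Set (EuclideanSpace ℝ (Fin ν)))
      (φ ψ : EuclideanSpace ℝ (Fin ν) → EuclideanSpace ℝ (Fin ν)),
    IsOpen U ∧ IsOpen V ∧ x ∈ U ∧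
    ContDiffOn ℝ (⊤ : ℕ∞) φ U ∧ ContDiffOn ℝ (⊤ : ℕ∞) ψ V ∧
    MapsTo φ U V ∧ MapsTo ψ V U ∧
    (∀ y ∈ U, ψ (φ y) = y) ∧ (∀ z ∈ V, φ (ψ z) = z) ∧
    (∀ y ∈ U, (y ∈ N ↔ ∀ i : Fin ν, d ≤ (i : ℕ) → φ y i = 0))

/-- The Gagliardo fractional energy `E^{s,p}_A(u)`. -/
def gagliardoE {l ν : ℕ} (s p : ℝ) (A : Set (EuclideanSpace ℝ (Fin l)))
    (u : EuclideanSpace ℝ (Fin l) → EuclideanSpace ℝ (Fin ν)) : ℝ≥0∞ :=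
  ∫⁻ x in A, ∫⁻ y in A, ENNReal.ofReal (‖u y - u x‖ ^ p / ‖y - x‖ ^ ((l : ℝ) + s * p))

/-- `f` is `C^1` on the closed set `A` in the sense that it is (the restriction of)
a `C^1` map on an open neighborhood of `A`. -/
def C1OnNhd {E F : Type*} [NormedAddCommGroup E] [NormedSpace ℝ E]
    [NormedAddCommGroup F] [NormedSpace ℝ F] (f : E → F) (A : Set E) : Prop :=
  ∃ V : Set E, IsOpen V ∧ A ⊆ V ∧ ContDiffOn ℝ 1 f V

/-- `f` is `C^∞` on the closed set `A` in the sense that it is (the restriction of)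
a smooth map on an open neighborhood of `A`. -/
def SmoothOnNhd {E F : Type*} [NormedAddCommGroup E] [NormedSpace ℝ E]
    [NormedAddCommGroup F] [NormedSpace ℝ F] (f : E → F) (A : Set E) : Prop :=
  ∃ V : Set E, IsOpen V ∧ A ⊆ V ∧ ContDiffOn ℝ (⊤ : ℕ∞) f V

/-- The `C^1` extension `p`-energy `E^{1,p}_ext(u)` of a map `u : B̄^l → N`:
the infimum (in `ℝ≥0∞`, so `sInf ∅ = ∞`) of `∫_{B^l × (0,1)} ‖DU‖^p` over all `C^1` maps
`U : B̄^l × [0,1] → N` with `U(·,0) = u`. -/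
def extEnergy {l ν : ℕ} (p : ℝ) (N : Set (EuclideanSpace ℝ (Fin ν)))
    (u : EuclideanSpace ℝ (Fin l) → EuclideanSpace ℝ (Fin ν)) : ℝ≥0∞ :=
  sInf { e | ∃ U : EuclideanSpace ℝ (Fin l) × ℝ → EuclideanSpace ℝ (Fin ν),
    C1OnNhd U (closedBall 0 1 ×ˢ Icc (0 : ℝ) 1) ∧
    MapsTo U (closedBall 0 1 ×ˢ Icc (0 : ℝ) 1) N ∧
    (∀ x ∈ closedBall (0 : EuclideanSpace ℝ (Fin l)) 1, U (x, 0) = u x) ∧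
    e = ∫⁻ z in ball (0 : EuclideanSpace ℝ (Fin l)) 1 ×ˢ Ioo (0 : ℝ) 1,
          ENNReal.ofReal (‖fderiv ℝ U z‖ ^ p) }

/-- `f` and `g`, mapping `B̄^l` into `N` and agreeing on `S^{l-1}`, are homotopic within `N`
relative to the sphere `S^{l-1}`. -/
def HomotopicRelSphere {l ν : ℕ} (N : Set (EuclideanSpace ℝ (Fin ν)))
    (f g : EuclideanSpace ℝ (Fin l) → EuclideanSpace ℝ (Fin ν)) : Prop :=
  ∃ H : EuclideanSpace ℝ (Fin l) × ℝ → EuclideanSpace ℝ (Fin ν),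
    ContinuousOn H (closedBall 0 1 ×ˢ Icc (0 : ℝ) 1) ∧
    MapsTo H (closedBall 0 1 ×ˢ Icc (0 : ℝ) 1) N ∧
    (∀ x ∈ closedBall (0 : EuclideanSpace ℝ (Fin l)) 1, H (x, 0) = f x ∧ H (x, 1) = g x) ∧
    (∀ x ∈ sphere (0 : EuclideanSpace ℝ (Fin l)) 1, ∀ t ∈ Icc (0 : ℝ) 1, H (x, t) = f x)

/-- The topological `p`-energy `E^{1,p}_top(u)` of `u : B̄^l → N` with `u = b` on `S^{l-1}`:
the infimum (in `ℝ≥0∞`) of `∫_{B^l} ‖Dw‖^p` over all `C^1` maps `w : B̄^l → N` with `w = b` on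
`S^{l-1}` that are homotopic to `u` relative to `S^{l-1}`. -/
def topEnergy {l ν : ℕ} (p : ℝ) (N : Set (EuclideanSpace ℝ (Fin ν)))
    (b : EuclideanSpace ℝ (Fin ν))
    (u : EuclideanSpace ℝ (Fin l) → EuclideanSpace ℝ (Fin ν)) : ℝ≥0∞ :=
  sInf { e | ∃ w : EuclideanSpace ℝ (Fin l) → EuclideanSpace ℝ (Fin ν),
    C1OnNhd w (closedBall 0 1) ∧ MapsTo w (closedBall 0 1) N ∧
    (∀ x ∈ sphere (0 : EuclideanSpace ℝ (Fin l)) 1, w x = b) ∧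
    HomotopicRelSphere N w u ∧
    e = ∫⁻ x in ball (0 : EuclideanSpace ℝ (Fin l)) 1, ENNReal.ofReal (‖fderiv ℝ w x‖ ^ p) }

/-!
For `sp > ℓ`, a bound on the `W^{s,p}` Gagliardo energy gives a uniform Hölder bound on the closed
ball (fractional Morrey inequality). The proof compares means over copies of the ball shrunk towards
the points considered; by convexity these copies stay in the ball, so that the estimate holds up to
the boundary. Among infinitely many maps of bounded energy, two are therefore uniformly close by the
Arzelà–Ascoli theorem. Maps into `N` that are uniformly close and agree on the sphere are homotopic
relative to the sphere: compose the straight-line homotopy with a retraction of a neighborhood of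
`N`. For a compact submanifold the nearest-point projection is such a retraction: chords of `N`
deviate from tangent directions only to second order, hence points near `N` have a unique nearest
point.
-/

open scoped NNReal

/-! ### Nearest points -/

section NearestPoint

variable {X : Type*} [PseudoMetricSpace X] {N : Set X} {y a z : X}

/-- `a` is a point of `N` nearest to `y`. -/
def IsNearestPoint (N : Set X) (y a : X) : Prop :=
  a ∈ N ∧ infDist y N = dist y a

theorem IsNearestPoint.dist_le (h : IsNearestPoint N y a) (hz : z ∈ N) : dist y a ≤ dist y z :=
  h.2 ▸ infDist_le_dist_of_mem hz

theorem isNearestPoint_of_mapClusterPt (hN : IsClosed N) {r : X → X}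
    (hr : ∀ z, IsNearestPoint N z (r z)) (ha : MapClusterPt a (𝓝 y) r) :
    IsNearestPoint N y a := by
  obtain ⟨u, hu, hua⟩ := mapClusterPt_iff_ultrafilter.1 ha
  have hdist : Tendsto (fun z => dist z (r z)) u (𝓝 (dist y a)) := Tendsto.dist hu hua
  have hinf : Tendsto (fun z => infDist z N) u (𝓝 (infDist y N)) :=
    ((continuous_infDist_pt N).tendsto y).mono_left hu
  refine ⟨hN.mem_of_tendsto hua (.of_forall fun z => (hr z).1), ?_⟩
  exact tendsto_nhds_unique (hinf.congr fun z => (hr z).2) hdist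

end NearestPoint

/-- `N` is a neighborhood retract: some open set containing `N` retracts continuously onto `N`. -/
def IsNeighborhoodRetract {X : Type*} [TopologicalSpace X] (N : Set X) : Prop :=
  ∃ O, IsOpen O ∧ N ⊆ O ∧ ∃ r : X → X, ContinuousOn r O ∧ MapsTo r O N ∧ EqOn r id N

theorem continuousAt_of_subsingleton_isNearestPoint {X : Type*} [MetricSpace X] {N : Set X}
    (hN : IsCompact N) {r : X → X} (hr : ∀ z, IsNearestPoint N z (r z)) {y : X}
    (hy : {a | IsNearestPoint N y a}.Subsingleton) : ContinuousAt r y :=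
  hN.tendsto_nhds_of_unique_mapClusterPt (.of_forall fun z => (hr z).1) fun _ _ ha =>
    hy (isNearestPoint_of_mapClusterPt hN.isClosed hr ha) (hr y)

theorem isNeighborhoodRetract_of_subsingleton_isNearestPoint {X : Type*} [MetricSpace X]
    {N : Set X} (hN : IsCompact N)
    (h : ∀ x ∈ N, ∀ᶠ y in 𝓝 x, {a | IsNearestPoint N y a}.Subsingleton) :
    IsNeighborhoodRetract N := by
  obtain rfl | hne := N.eq_empty_or_nonempty
  · exact ⟨∅, isOpen_empty, subset_rfl, id, continuousOn_id, mapsTo_id _, eqOn_empty _ _⟩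
  have hexists (y : X) : ∃ a, IsNearestPoint N y a := hN.exists_infDist_eq_dist hne y
  choose r hr using hexists
  refine ⟨{y | ∀ᶠ z in 𝓝 y, {a | IsNearestPoint N z a}.Subsingleton},
    isOpen_setOfPred_eventually_nhds, h, r, fun y hy => ?_, fun y _ => (hr y).1, fun y hy => ?_⟩
  · exact (continuousAt_of_subsingleton_isNearestPoint hN hr hy.self_of_nhds).continuousWithinAt
  · have : dist y (r y) ≤ dist y y := (hr y).dist_le hy
    exact (dist_le_zero.1 (this.trans_eq (dist_self y))).symm

section PositiveReach

variable {E F : Type*} [NormedAddCommGroup E] [NormedSpace ℝ E] [NormedAddCommGroup F]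

theorem norm_sub_sub_le_of_lipschitzOnWith_hasFDerivWithinAt [NormedSpace ℝ F] {S : Set E}
    (hS : Convex ℝ S) {ψ : E → F} {ψ' : E → E →L[ℝ] F}
    (hψ : ∀ z ∈ S, HasFDerivWithinAt ψ (ψ' z) S z) {K : ℝ≥0} (hψ' : LipschitzOnWith K ψ' S)
    {P Q : E} (hP : P ∈ S) (hQ : Q ∈ S) :
    ‖ψ Q - ψ P - ψ' P (Q - P)‖ ≤ K * ‖Q - P‖ ^ 2 := by
  have hPB : P ∈ S ∩ closedBall P ‖Q - P‖ := ⟨hP, mem_closedBall_self (norm_nonneg _)⟩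
  have hQB : Q ∈ S ∩ closedBall P ‖Q - P‖ := ⟨hQ, mem_closedBall_iff_norm.2 le_rfl⟩
  have hbound : ∀ z ∈ S ∩ closedBall P ‖Q - P‖, ‖ψ' z - ψ' P‖ ≤ K * ‖Q - P‖ := fun z hz =>
    (hψ'.norm_sub_le hz.1 hP).trans (by gcongr; exact mem_closedBall_iff_norm.1 hz.2)
  calc ‖ψ Q - ψ P - ψ' P (Q - P)‖ ≤ K * ‖Q - P‖ * ‖Q - P‖ :=
        (hS.inter (convex_closedBall _ _)).norm_image_sub_le_of_norm_hasFDerivWithin_le'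
          (fun z hz => (hψ z hz.1).mono inter_subset_left) hbound hPB hQB
    _ = K * ‖Q - P‖ ^ 2 := by ring

variable [InnerProductSpace ℝ F] {N : Set F} {y : F}

theorem IsNearestPoint.inner_hasFDerivWithinAt_nonpos {S : Set E} {ψ : E → F} {ψ' : E →L[ℝ] F}
    {P v : E} (h : IsNearestPoint N y (ψ P)) (hψ : HasFDerivWithinAt ψ ψ' S P)
    (hψN : MapsTo ψ S N) (hv : v ∈ posTangentConeAt S P) : inner ℝ (y - ψ P) (ψ' v) ≤ 0 := by
  have hmin : IsLocalMinOn (fun z => ‖y - ψ z‖ ^ 2) S P := by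
    filter_upwards [self_mem_nhdsWithin] with z hz
    gcongr
    simpa only [dist_eq_norm] using h.dist_le (hψN hz)
  have hderiv := hmin.hasFDerivWithinAt_nonneg (hψ.const_sub y).norm_sq hv
  simpa [inner_sub_left] using hderiv

theorem IsNearestPoint.inner_sub_le {S : Set E} (hS : Convex ℝ S) {ψ : E → F} {ψ' : E → E →L[ℝ] F}
    (hψ : ∀ z ∈ S, HasFDerivWithinAt ψ (ψ' z) S z) {K : ℝ≥0} (hψ' : LipschitzOnWith K ψ' S)
    (hψN : MapsTo ψ S N) {P Q : E} (hP : P ∈ S) (hQ : Q ∈ S) (h : IsNearestPoint N y (ψ P)) :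
    inner ℝ (y - ψ P) (ψ Q - ψ P) ≤ K * ‖y - ψ P‖ * ‖Q - P‖ ^ 2 := by
  have hcone : Q - P ∈ posTangentConeAt S P :=
    mem_posTangentConeAt_of_segment_subset (by simpa using hS.segment_subset hP hQ)
  have hfirst : inner ℝ (y - ψ P) (ψ' P (Q - P)) ≤ 0 :=
    h.inner_hasFDerivWithinAt_nonpos (hψ P hP) hψN hcone
  calc inner ℝ (y - ψ P) (ψ Q - ψ P)
      = inner ℝ (y - ψ P) (ψ' P (Q - P))
        + inner ℝ (y - ψ P) (ψ Q - ψ P - ψ' P (Q - P)) := by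
        rw [← inner_add_right, add_sub_cancel]
    _ ≤ 0 + ‖y - ψ P‖ * (K * ‖Q - P‖ ^ 2) := by
        refine add_le_add hfirst ((real_inner_le_norm _ _).trans ?_)
        gcongr
        exact norm_sub_sub_le_of_lipschitzOnWith_hasFDerivWithinAt hS hψ hψ' hP hQ
    _ = K * ‖y - ψ P‖ * ‖Q - P‖ ^ 2 := by ring

/-- Local form of Federer's condition of positive reach: near each point of `N`, the vector from a
nearest point `a` to `y` makes only a quadratically small positive inner product with the chords
`a' - a` of `N`. It makes nearest points locally unique. -/
def HasLocallyPositiveReach (N : Set F) : Prop :=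
  ∀ x ∈ N, ∃ C : ℝ, ∃ W ∈ 𝓝 x, ∀ a ∈ W, ∀ a' ∈ W ∩ N, ∀ y,
    IsNearestPoint N y a → inner ℝ (y - a) (a' - a) ≤ C * ‖y - a‖ * ‖a' - a‖ ^ 2

theorem IsNearestPoint.inner_sub_eq {a a' : F} (ha : IsNearestPoint N y a)
    (ha' : IsNearestPoint N y a') : inner ℝ (y - a) (a' - a) = ‖a' - a‖ ^ 2 / 2 := by
  have hnorm : ‖y - a'‖ = ‖y - a‖ := by
    rw [← dist_eq_norm, ← dist_eq_norm, ← ha.2, ← ha'.2]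
  have hexpand := norm_sub_sq_real (y - a) (a' - a)
  rw [sub_sub_sub_cancel_right, hnorm] at hexpand
  linarith

theorem HasLocallyPositiveReach.eventually_subsingleton_isNearestPoint
    (hN : HasLocallyPositiveReach N) {x : F} (hx : x ∈ N) :
    ∀ᶠ y in 𝓝 x, {a | IsNearestPoint N y a}.Subsingleton := by
  obtain ⟨C, W, hW, hreach⟩ := hN x hx
  obtain ⟨δ, hδ, hδW⟩ := Metric.mem_nhds_iff.1 hW
  have hclose : ∀ᶠ y in 𝓝 x, dist y x < δ / 2 := ball_mem_nhds x (half_pos hδ)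
  have hsmall : ∀ᶠ y in 𝓝 x, |C| * dist y x < 1 / 2 :=
    (by fun_prop : Continuous fun y => |C| * dist y x).continuousAt.eventually_lt_const (by simp)
  filter_upwards [hclose, hsmall] with y hyδ hyC
  have hmem (c : F) (hc : IsNearestPoint N y c) : c ∈ W := hδW <| by
    have := hc.dist_le hx
    have := dist_triangle_left c x y
    rw [mem_ball]
    linarith
  intro a ha a' ha'
  by_contra hne
  have hpos : 0 < ‖a' - a‖ ^ 2 := by
    have := norm_pos_iff.2 (sub_ne_zero.2 (Ne.symm hne))
    positivity
  have hfactor : C * ‖y - a‖ < 1 / 2 := by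
    refine lt_of_le_of_lt ?_ hyC
    rw [← dist_eq_norm]
    exact mul_le_mul (le_abs_self C) (ha.dist_le hx) dist_nonneg (abs_nonneg C)
  have := hreach a (hmem a ha) a' ⟨hmem a' ha', ha'.1⟩ y ha
  rw [ha.inner_sub_eq ha'] at this
  linarith [mul_lt_mul_of_pos_right hfactor hpos]

theorem HasLocallyPositiveReach.isNeighborhoodRetract (hN : HasLocallyPositiveReach N)
    (hNcpt : IsCompact N) : IsNeighborhoodRetract N :=
  isNeighborhoodRetract_of_subsingleton_isNearestPoint hNcpt fun _ hx =>
    hN.eventually_subsingleton_isNearestPoint hx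

end PositiveReach

section SmoothSubmanifold

variable {ν : ℕ} {N : Set (EuclideanSpace ℝ (Fin ν))}

theorem IsSmoothSubmanifold.exists_convex_parametrization (hN : IsSmoothSubmanifold N)
    {x : EuclideanSpace ℝ (Fin ν)} (hx : x ∈ N) :
    ∃ (φ ψ : EuclideanSpace ℝ (Fin ν) → EuclideanSpace ℝ (Fin ν)) (K L : ℝ≥0),
      ∃ S : Set (EuclideanSpace ℝ (Fin ν)), ∃ W ∈ 𝓝 x, Convex ℝ S ∧
        (∀ z ∈ S, DifferentiableAt ℝ ψ z) ∧ LipschitzOnWith K (fderiv ℝ ψ) S ∧ MapsTo ψ S N ∧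
        LipschitzOnWith L φ W ∧ MapsTo φ (W ∩ N) S ∧ LeftInvOn ψ φ W := by
  obtain ⟨d, hd⟩ := hN
  obtain ⟨U, V, φ, ψ, hU, hV, hxU, hφ, hψ, hφUV, hψVU, hψφ, hφψ, hUN⟩ := hd x hx
  have hφx : V ∈ 𝓝 (φ x) := hV.mem_nhds (hφUV hxU)
  have hφC1 : ContDiffAt ℝ 1 φ x :=
    (hφ.contDiffAt (hU.mem_nhds hxU)).of_le (by exact_mod_cast le_top)
  have hψC2 : ContDiffAt ℝ 2 ψ (φ x) :=
    (hψ.contDiffAt hφx).of_le (WithTop.coe_le_coe.2 (le_top : (2 : ℕ∞) ≤ ⊤))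
  obtain ⟨L, W, hW, hL⟩ := hφC1.exists_lipschitzOnWith
  obtain ⟨K, T, hT, hK⟩ :=
    (hψC2.fderiv_right (m := 1) (by norm_num)).exists_lipschitzOnWith
  obtain ⟨ρ, hρ, hρTV⟩ := Metric.mem_nhds_iff.1 (inter_mem hT hφx)
  let slice : Set (EuclideanSpace ℝ (Fin ν)) := {z | ∀ i : Fin ν, d ≤ (i : ℕ) → z i = 0}
  have hslice : Convex ℝ slice := fun z hz z' hz' α β _ _ _ i hi => by
    simp [hz i hi, hz' i hi]
  refine ⟨φ, ψ, K, L, ball (φ x) ρ ∩ slice, W ∩ U ∩ φ ⁻¹' ball (φ x) ρ,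
    inter_mem (inter_mem hW (hU.mem_nhds hxU)) (hφC1.continuousAt (ball_mem_nhds _ hρ)),
    (convex_ball _ _).inter hslice, fun z hz => ?_, hK.mono fun z hz => (hρTV hz.1).1,
    fun z hz => ?_, hL.mono fun a ha => ha.1.1,
    fun a ha => ⟨ha.1.2, (hUN a ha.1.1.2).1 ha.2⟩, fun a ha => hψφ a ha.1.2⟩
  · exact (hψ.contDiffAt (hV.mem_nhds (hρTV hz.1).2)).differentiableAt (by simp)
  · have hzV := (hρTV hz.1).2
    rw [hUN _ (hψVU hzV), hφψ z hzV]
    exact hz.2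

theorem IsSmoothSubmanifold.hasLocallyPositiveReach (hN : IsSmoothSubmanifold N) :
    HasLocallyPositiveReach N := by
  intro x hx
  obtain ⟨φ, ψ, K, L, S, W, hW, hS, hψ, hψ', hψN, hφ, hφS, hψφ⟩ :=
    hN.exists_convex_parametrization hx
  refine ⟨K * L ^ 2, W, hW, fun a ha a' ha' y hy => ?_⟩
  have hnear : IsNearestPoint N y (ψ (φ a)) := by rwa [hψφ ha]
  have hchart := hnear.inner_sub_le hS (fun z hz => (hψ z hz).hasFDerivAt.hasFDerivWithinAt) hψ'
    hψN (hφS ⟨ha, hy.1⟩) (hφS ha')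
  rw [hψφ ha, hψφ ha'.1] at hchart
  calc inner ℝ (y - a) (a' - a) ≤ K * ‖y - a‖ * ‖φ a' - φ a‖ ^ 2 := hchart
    _ ≤ K * ‖y - a‖ * (L * ‖a' - a‖) ^ 2 := by
        gcongr
        exact hφ.norm_sub_le ha'.1 ha
    _ = K * L ^ 2 * ‖y - a‖ * ‖a' - a‖ ^ 2 := by ring

end SmoothSubmanifold

theorem IsNeighborhoodRetract.exists_homotopicRelSphere_of_dist_lt {ν : ℕ}
    {N : Set (EuclideanSpace ℝ (Fin ν))} (hN : IsNeighborhoodRetract N) (hNcpt : IsCompact N)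
    (l : ℕ) :
    ∃ ε > 0, ∀ f g : EuclideanSpace ℝ (Fin l) → EuclideanSpace ℝ (Fin ν),
      ContinuousOn f (closedBall 0 1) → ContinuousOn g (closedBall 0 1) →
      MapsTo f (closedBall 0 1) N → MapsTo g (closedBall 0 1) N → EqOn f g (sphere 0 1) →
      (∀ x ∈ closedBall 0 1, dist (f x) (g x) < ε) → HomotopicRelSphere N f g := by
  obtain ⟨O, hO, hNO, r, hr, hrN, hrid⟩ := hN
  obtain ⟨ε, hε, hεO⟩ := hNcpt.exists_thickening_subset_open hO hNO
  refine ⟨ε, hε, fun f g hf hg hfN hgN hfg hdist => ?_⟩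
  have hf' : ContinuousOn (fun z : EuclideanSpace ℝ (Fin l) × ℝ => f z.1)
      (closedBall 0 1 ×ˢ Icc 0 1) := hf.comp continuousOn_fst fun z hz => hz.1
  have hg' : ContinuousOn (fun z : EuclideanSpace ℝ (Fin l) × ℝ => g z.1)
      (closedBall 0 1 ×ˢ Icc 0 1) := hg.comp continuousOn_fst fun z hz => hz.1
  have hline : MapsTo (fun z : EuclideanSpace ℝ (Fin l) × ℝ =>
      AffineMap.lineMap (f z.1) (g z.1) z.2) (closedBall 0 1 ×ˢ Icc 0 1) O := by
    rintro ⟨x, t⟩ ⟨hx, ht⟩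
    refine hεO (mem_thickening_iff.2 ⟨f x, hfN hx, ?_⟩)
    rw [dist_lineMap_left, Real.norm_of_nonneg ht.1]
    exact (mul_le_of_le_one_left dist_nonneg ht.2).trans_lt (hdist x hx)
  refine ⟨fun z => r (AffineMap.lineMap (f z.1) (g z.1) z.2),
    hr.comp (hf'.lineMap hg' continuousOn_snd) hline, hrN.comp hline, fun x hx => ?_,
    fun x hx t _ => ?_⟩
  · simp [hrid (hfN hx), hrid (hgN hx)]
  · simp [← hfg hx, hrid (hfN (sphere_subset_closedBall hx))]

/-! ### A fractional Morrey inequality on convex bodies -/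

section Average

variable {α β E : Type*} {mα : MeasurableSpace α} {mβ : MeasurableSpace β}
  [NormedAddCommGroup E] [NormedSpace ℝ E]

theorem enorm_integral_rpow_le {μ : Measure α} [IsProbabilityMeasure μ] {f : α → E}
    (hf : AEStronglyMeasurable f μ) {p : ℝ} (hp : 1 ≤ p) :
    ‖∫ x, f x ∂μ‖ₑ ^ p ≤ ∫⁻ x, ‖f x‖ₑ ^ p ∂μ := by
  have hp0 : 0 < p := one_pos.trans_le hp
  have hnorm : ‖∫ x, f x ∂μ‖ₑ ≤ (∫⁻ x, ‖f x‖ₑ ^ p ∂μ) ^ (1 / p) :=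
    calc ‖∫ x, f x ∂μ‖ₑ ≤ eLpNorm' f 1 μ := by
          simpa [eLpNorm'] using enorm_integral_le_lintegral_enorm (μ := μ) f
      _ ≤ eLpNorm' f p μ := eLpNorm'_le_eLpNorm'_of_exponent_le one_pos hp μ hf
  rwa [one_div, ENNReal.le_rpow_inv_iff hp0] at hnorm

variable [CompleteSpace E]

theorem enorm_average_sub_rpow_le {μ : Measure α} [IsFiniteMeasure μ] [NeZero μ] {f : α → E}
    (hf : Integrable f μ) (c : E) {p : ℝ} (hp : 1 ≤ p) :
    ‖(⨍ x, f x ∂μ) - c‖ₑ ^ p ≤ ⨍⁻ x, ‖f x - c‖ₑ ^ p ∂μ := by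
  have hsub : (⨍ x, f x ∂μ) - c = ∫ x, (f x - c) ∂((μ univ)⁻¹ • μ) := by
    rw [integral_sub hf.to_average (integrable_const c), integral_const, probReal_univ, one_smul,
      average_eq']
  rw [hsub]
  exact enorm_integral_rpow_le (hf.to_average.sub (integrable_const c)).aestronglyMeasurable hp

theorem enorm_average_sub_average_rpow_le {μ : Measure α} [IsFiniteMeasure μ] [NeZero μ]
    {μ' : Measure β} [IsFiniteMeasure μ'] [NeZero μ'] {f : α → E} {g : β → E}
    (hf : Integrable f μ) (hg : Integrable g μ') {p : ℝ} (hp : 1 ≤ p) :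
    ‖(⨍ x, f x ∂μ) - ⨍ y, g y ∂μ'‖ₑ ^ p ≤ ⨍⁻ x, ⨍⁻ y, ‖g y - f x‖ₑ ^ p ∂μ' ∂μ :=
  (enorm_average_sub_rpow_le hf _ hp).trans <| lintegral_mono fun x => by
    rw [enorm_sub_rev]
    exact enorm_average_sub_rpow_le hg _ hp

end Average

section Gagliardo

variable {l ν : ℕ} {s p : ℝ} {A S T : Set (EuclideanSpace ℝ (Fin l))}
  {u : EuclideanSpace ℝ (Fin l) → EuclideanSpace ℝ (Fin ν)}

theorem gagliardoE_congr_ae (h : S =ᵐ[volume] T) : gagliardoE s p S u = gagliardoE s p T u := by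
  simp only [gagliardoE, Measure.restrict_congr_set h]

theorem ball_ae_eq_closedBall {E : Type*} [NormedAddCommGroup E] [NormedSpace ℝ E]
    [MeasurableSpace E] [BorelSpace E] [FiniteDimensional ℝ E] (μ : Measure E)
    [μ.IsAddHaarMeasure] (x : E) {r : ℝ} (hr : r ≠ 0) : ball x r =ᵐ[μ] closedBall x r := by
  rw [← ball_union_sphere]
  exact (union_ae_eq_left_of_ae_eq_empty
    (ae_eq_empty.2 (Measure.addHaar_sphere_of_ne_zero μ x hr))).symm

theorem enorm_sub_rpow_le_ofReal_mul {E F : Type*} [NormedAddCommGroup E] [NormedAddCommGroup F]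
    {u : E → F} {x y : E} {d q : ℝ} (hp : 0 < p) (hq : 0 ≤ q) (hxy : dist x y ≤ d) :
    ‖u y - u x‖ₑ ^ p ≤
      ENNReal.ofReal (d ^ q) * ENNReal.ofReal (‖u y - u x‖ ^ p / ‖y - x‖ ^ q) := by
  obtain rfl | hne := eq_or_ne x y
  · simp [hp]
  have hd : 0 ≤ d := dist_nonneg.trans hxy
  have hnorm : 0 < ‖y - x‖ := norm_sub_pos_iff.2 hne.symm
  rw [← ofReal_norm, ENNReal.ofReal_rpow_of_nonneg (norm_nonneg _) hp.le,
    ← ENNReal.ofReal_mul (by positivity)]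
  refine ENNReal.ofReal_le_ofReal ?_
  calc ‖u y - u x‖ ^ p = ‖y - x‖ ^ q * (‖u y - u x‖ ^ p / ‖y - x‖ ^ q) := by field_simp
    _ ≤ d ^ q * (‖u y - u x‖ ^ p / ‖y - x‖ ^ q) := by
      gcongr
      rwa [← dist_eq_norm, dist_comm]

theorem enorm_setAverage_sub_setAverage_rpow_le (hp : 1 ≤ p) (hsp : 0 ≤ l + s * p) {d : ℝ}
    (hA : volume A ≠ ∞) (hu : IntegrableOn u A) (hS : MeasurableSet S) (hT : MeasurableSet T)
    (hSA : S ⊆ A) (hTA : T ⊆ A) (hS0 : volume S ≠ 0) (hT0 : volume T ≠ 0)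
    (hd : ∀ x ∈ S, ∀ y ∈ T, dist x y ≤ d) :
    ‖(⨍ x in S, u x) - ⨍ y in T, u y‖ₑ ^ p ≤
      ENNReal.ofReal (d ^ (l + s * p)) * gagliardoE s p A u / volume T / volume S := by
  have := Fact.mk (measure_lt_top_of_subset hSA hA)
  have := Fact.mk (measure_lt_top_of_subset hTA hA)
  have : NeZero (volume.restrict S) := ⟨Measure.restrict_eq_zero.not.2 hS0⟩
  have : NeZero (volume.restrict T) := ⟨Measure.restrict_eq_zero.not.2 hT0⟩
  let G (x y : EuclideanSpace ℝ (Fin l)) : ℝ≥0∞ :=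
    ENNReal.ofReal (‖u y - u x‖ ^ p / ‖y - x‖ ^ (l + s * p))
  calc ‖(⨍ x in S, u x) - ⨍ y in T, u y‖ₑ ^ p
      ≤ ⨍⁻ x in S, ⨍⁻ y in T, ‖u y - u x‖ₑ ^ p ∂volume ∂volume :=
        enorm_average_sub_average_rpow_le (hu.mono_set hSA) (hu.mono_set hTA) hp
    _ = (∫⁻ x in S, ∫⁻ y in T, ‖u y - u x‖ₑ ^ p) / volume T / volume S := by
        simp only [setLAverage_eq, div_eq_mul_inv]
        rw [lintegral_mul_const' _ _ (ENNReal.inv_ne_top.2 hT0)]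
    _ ≤ (∫⁻ x in S, ∫⁻ y in T, ENNReal.ofReal (d ^ (l + s * p)) * G x y)
          / volume T / volume S := by
        gcongr ?_ / _ / _
        exact setLIntegral_mono' hS fun x hx => setLIntegral_mono' hT fun y hy =>
          enorm_sub_rpow_le_ofReal_mul (one_pos.trans_le hp) hsp (hd x hx y hy)
    _ = ENNReal.ofReal (d ^ (l + s * p)) * (∫⁻ x in S, ∫⁻ y in T, G x y)
          / volume T / volume S := by
        simp only [lintegral_const_mul' _ _ ENNReal.ofReal_ne_top]
    _ ≤ ENNReal.ofReal (d ^ (l + s * p)) * gagliardoE s p A u / volume T / volume S := by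
        gcongr
        exact (lintegral_mono_set hSA).trans (lintegral_mono fun x => lintegral_mono_set hTA)

theorem dist_setAverage_le_of_gagliardoE_le (hp : 1 ≤ p) (hsp : 0 ≤ l + s * p) {d : ℝ} {M : ℝ≥0}
    (hA : volume A ≠ ∞) (hu : IntegrableOn u A) (hS : MeasurableSet S) (hT : MeasurableSet T)
    (hSA : S ⊆ A) (hTA : T ⊆ A) (hS0 : volume S ≠ 0) (hT0 : volume T ≠ 0)
    (hd : ∀ x ∈ S, ∀ y ∈ T, dist x y ≤ d) (hM : gagliardoE s p A u ≤ M) :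
    dist (⨍ x in S, u x) (⨍ y in T, u y) ≤
      (d ^ (l + s * p) * M / volume.real T / volume.real S) ^ (1 / p) := by
  have hSf := measure_ne_top_of_subset hSA hA
  have hTf := measure_ne_top_of_subset hTA hA
  have hSpos : 0 < volume.real S := ENNReal.toReal_pos hS0 hSf
  have hTpos : 0 < volume.real T := ENNReal.toReal_pos hT0 hTf
  have hp0 : 0 < p := one_pos.trans_le hp
  obtain ⟨x, hx⟩ := nonempty_of_measure_ne_zero hS0
  obtain ⟨y, hy⟩ := nonempty_of_measure_ne_zero hT0
  have hd0 : 0 ≤ d := dist_nonneg.trans (hd x hx y hy)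
  have hbound : ‖(⨍ x in S, u x) - ⨍ y in T, u y‖ₑ ^ p ≤
      ENNReal.ofReal (d ^ (l + s * p)) * M / volume T / volume S :=
    (enorm_setAverage_sub_setAverage_rpow_le hp hsp hA hu hS hT hSA hTA hS0 hT0 hd).trans
      (by gcongr)
  rw [← ofReal_norm, ENNReal.ofReal_rpow_of_nonneg (norm_nonneg _) hp0.le,
    ← ofReal_measureReal hSf, ← ofReal_measureReal hTf, ← ENNReal.ofReal_coe_nnreal,
    ← ENNReal.ofReal_mul (by positivity), ← ENNReal.ofReal_div_of_pos hTpos,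
    ← ENNReal.ofReal_div_of_pos hSpos, ENNReal.ofReal_le_ofReal_iff (by positivity)] at hbound
  rw [dist_eq_norm, one_div, Real.le_rpow_inv_iff_of_pos (norm_nonneg _) (by positivity) hp0]
  exact hbound

end Gagliardo

section Homothety

variable {E : Type*} [NormedAddCommGroup E] [NormedSpace ℝ E] {A : Set E} {x z : E} {t D : ℝ}

theorem image_homothety_subset (hA : Convex ℝ A) (hx : x ∈ A) (ht : t ∈ Icc 0 1) :
    AffineMap.homothety x t '' A ⊆ A := by
  rintro _ ⟨z, hz, rfl⟩
  rw [AffineMap.homothety_eq_lineMap]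
  exact hA.lineMap_mem hx hz ht

theorem dist_le_of_mem_image_homothety (hD : ∀ a ∈ A, dist x a ≤ D) (ht : 0 ≤ t)
    (hz : z ∈ AffineMap.homothety x t '' A) : dist x z ≤ t * D := by
  obtain ⟨a, ha, rfl⟩ := hz
  rw [dist_center_homothety, Real.norm_of_nonneg ht]
  gcongr
  exact hD a ha

end Homothety

section Morrey

variable {l ν : ℕ} {s p : ℝ} {A : Set (EuclideanSpace ℝ (Fin l))}
  {u : EuclideanSpace ℝ (Fin l) → EuclideanSpace ℝ (Fin ν)} {x y : EuclideanSpace ℝ (Fin l)}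

/-- The mean of `u` over the copy of `A` shrunk towards `x` by the ratio `t`. When `A` is convex and
contains `x`, this copy stays in `A`; these means replace the means over small balls centered at
`x`, which leave `A` when `x` is a boundary point. -/
def homothetyAverage (A : Set (EuclideanSpace ℝ (Fin l)))
    (u : EuclideanSpace ℝ (Fin l) → EuclideanSpace ℝ (Fin ν)) (x : EuclideanSpace ℝ (Fin l))
    (t : ℝ) : EuclideanSpace ℝ (Fin ν) :=
  ⨍ z in AffineMap.homothety x t '' A, u z

theorem volume_image_homothety {t : ℝ} (ht : 0 ≤ t) :
    volume (AffineMap.homothety x t '' A) = ENNReal.ofReal (t ^ l) * volume A := by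
  rw [Measure.addHaar_image_homothety, finrank_euclideanSpace_fin, abs_of_nonneg (by positivity)]

theorem volume_real_image_homothety {t : ℝ} (ht : 0 ≤ t) :
    volume.real (AffineMap.homothety x t '' A) = t ^ l * volume.real A := by
  rw [measureReal_def, volume_image_homothety ht, ENNReal.toReal_mul,
    ENNReal.toReal_ofReal (by positivity), measureReal_def]

theorem volume_image_homothety_ne_zero (hA0 : volume A ≠ 0) {t : ℝ} (ht : 0 < t) :
    volume (AffineMap.homothety x t '' A) ≠ 0 := by
  rw [volume_image_homothety ht.le]
  exact mul_ne_zero (ENNReal.ofReal_pos.2 (by positivity)).ne' hA0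

theorem dist_homothetyAverage_le (hp : 1 ≤ p) (hsp : 0 ≤ l + s * p) (hA : Convex ℝ A)
    (hAcpt : IsCompact A) (hA0 : volume A ≠ 0) (hu : ContinuousOn u A) {M : ℝ≥0}
    (hM : gagliardoE s p A u ≤ M) {D : ℝ} (hD : ∀ x ∈ A, ∀ y ∈ A, dist x y ≤ D)
    (hx : x ∈ A) (hy : y ∈ A) {t t' : ℝ} (ht : t ∈ Ioc 0 1) (ht' : t' ∈ Ioc 0 1) :
    dist (homothetyAverage A u x t) (homothetyAverage A u y t') ≤
      ((t * D + dist x y + t' * D) ^ (l + s * p) * M / (t' ^ l * volume.real A)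
        / (t ^ l * volume.real A)) ^ (1 / p) := by
  have hdist : ∀ a ∈ AffineMap.homothety x t '' A, ∀ c ∈ AffineMap.homothety y t' '' A,
      dist a c ≤ t * D + dist x y + t' * D := fun a ha c hc => by
    have hxa := dist_le_of_mem_image_homothety (hD x hx) ht.1.le ha
    have hyc := dist_le_of_mem_image_homothety (hD y hy) ht'.1.le hc
    linarith [dist_triangle4_left x y a c]
  have hmeas (w : EuclideanSpace ℝ (Fin l)) (r : ℝ) :
      MeasurableSet (AffineMap.homothety w r '' A) :=
    (hAcpt.image (AffineMap.homothety_continuous w r)).measurableSet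
  rw [← volume_real_image_homothety (x := x) ht.1.le,
    ← volume_real_image_homothety (x := y) ht'.1.le]
  exact dist_setAverage_le_of_gagliardoE_le hp hsp hAcpt.measure_ne_top
    (hu.integrableOn_compact hAcpt) (hmeas x t) (hmeas y t')
    (image_homothety_subset hA hx ⟨ht.1.le, ht.2⟩)
    (image_homothety_subset hA hy ⟨ht'.1.le, ht'.2⟩)
    (volume_image_homothety_ne_zero hA0 ht.1) (volume_image_homothety_ne_zero hA0 ht'.1) hdist hM

theorem dist_homothetyAverage_le_mul_rpow (hp : 1 ≤ p) (hsp : 0 ≤ l + s * p) (hA : Convex ℝ A)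
    (hAcpt : IsCompact A) (hA0 : volume A ≠ 0) (hu : ContinuousOn u A) {M : ℝ≥0}
    (hM : gagliardoE s p A u ≤ M) {D : ℝ} (hD : ∀ x ∈ A, ∀ y ∈ A, dist x y ≤ D)
    (hx : x ∈ A) (hy : y ∈ A) {t t' : ℝ} (ht : t ∈ Ioc 0 1) (ht' : t' ∈ Icc (t / 2) t)
    (hxy : dist x y ≤ D * t) :
    dist (homothetyAverage A u x t) (homothetyAverage A u y t') ≤
      ((3 * D) ^ (l + s * p) * 2 ^ l * M / volume.real A ^ 2) ^ (1 / p) * t ^ (s - l / p) := by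
  have ht0 : 0 < t := ht.1
  have ht0' : 0 < t' := (half_pos ht0).trans_le ht'.1
  have hp0 : 0 < p := one_pos.trans_le hp
  have hD0 : 0 ≤ D := dist_nonneg.trans (hD x hx x hx)
  have hV : 0 < volume.real A := ENNReal.toReal_pos hA0 hAcpt.measure_ne_top
  have hdiam : t * D + dist x y + t' * D ≤ 3 * D * t := by
    linarith [mul_le_mul_of_nonneg_right ht'.2 hD0]
  have hscale : t ^ (l + s * p) / (t ^ l * t ^ l) = (t ^ (s - l / p)) ^ p := by
    rw [← Real.rpow_natCast t l, ← Real.rpow_add ht0, ← Real.rpow_sub ht0, ← Real.rpow_mul ht0.le]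
    congr 1
    field_simp
    ring
  calc dist (homothetyAverage A u x t) (homothetyAverage A u y t')
      ≤ ((t * D + dist x y + t' * D) ^ (l + s * p) * M / (t' ^ l * volume.real A)
          / (t ^ l * volume.real A)) ^ (1 / p) :=
        dist_homothetyAverage_le hp hsp hA hAcpt hA0 hu hM hD hx hy ht ⟨ht0', ht'.2.trans ht.2⟩
    _ ≤ ((3 * D * t) ^ (l + s * p) * M / ((t / 2) ^ l * volume.real A)
          / (t ^ l * volume.real A)) ^ (1 / p) := by
        gcongr
        exact ht'.1
    _ = ((3 * D) ^ (l + s * p) * 2 ^ l * M / volume.real A ^ 2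
          * (t ^ (l + s * p) / (t ^ l * t ^ l))) ^ (1 / p) := by
        rw [Real.mul_rpow (by positivity) ht0.le, div_pow]
        congr 1
        field_simp
    _ = ((3 * D) ^ (l + s * p) * 2 ^ l * M / volume.real A ^ 2) ^ (1 / p) * t ^ (s - l / p) := by
        rw [hscale, Real.mul_rpow (by positivity) (by positivity), one_div,
          Real.rpow_rpow_inv (by positivity) hp0.ne']

theorem tendsto_homothetyAverage (hA : Convex ℝ A) (hAcpt : IsCompact A) (hA0 : volume A ≠ 0)
    (hu : ContinuousOn u A) (hx : x ∈ A) :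
    Tendsto (homothetyAverage A u x) (𝓝[>] 0) (𝓝 (u x)) := by
  refine Metric.nhds_basis_closedBall.tendsto_right_iff.2 fun ε hε => ?_
  obtain ⟨δ, hδ, hδu⟩ := Metric.continuousWithinAt_iff.1 (hu x hx) ε hε
  obtain ⟨D, hD⟩ := hAcpt.isBounded.subset_closedBall x
  have hsmall : ∀ᶠ t : ℝ in 𝓝[>] 0, t * D < δ :=
    (by fun_prop : Continuous fun t : ℝ => t * D).continuousWithinAt.eventually_lt_const
      (by simpa using hδ)
  filter_upwards [hsmall, Ioc_mem_nhdsGT one_pos] with t htδ ht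
  have hsub := image_homothety_subset hA hx ⟨ht.1.le, ht.2⟩
  have hcpt := hAcpt.image (AffineMap.homothety_continuous x t)
  refine (convex_closedBall _ _).set_average_mem isClosed_closedBall
    (volume_image_homothety_ne_zero hA0 ht.1) hcpt.measure_ne_top ?_
    ((hu.integrableOn_compact hAcpt).mono_set hsub)
  filter_upwards [ae_restrict_mem hcpt.measurableSet] with z hz
  refine (hδu (hsub hz) ?_).le
  rw [dist_comm]
  exact (dist_le_of_mem_image_homothety (fun a ha => mem_closedBall'.1 (hD ha)) ht.1.le hz).trans_lt
    htδ

end Morrey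

/-- Campanato's argument: telescope the means over the dyadic scales `t / 2 ^ n`. -/
theorem dist_le_of_tendsto_of_dist_le_rpow {X Y : Type*} [PseudoMetricSpace X]
    [PseudoMetricSpace Y] {A : Set X} {u : X → Y} {m : X → ℝ → Y} {C D α : ℝ} (hα : 0 < α)
    (hD : 0 ≤ D)
    (hm : ∀ x ∈ A, ∀ y ∈ A, ∀ t ∈ Ioc (0 : ℝ) 1, ∀ t' ∈ Icc (t / 2) t, dist x y ≤ D * t →
      dist (m x t) (m y t') ≤ C * t ^ α)
    (hlim : ∀ x ∈ A, Tendsto (m x) (𝓝[>] 0) (𝓝 (u x))) {x y : X} (hx : x ∈ A) (hy : y ∈ A) {t : ℝ}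
    (ht : t ∈ Ioc (0 : ℝ) 1) (hxy : dist x y ≤ D * t) :
    dist (u x) (u y) ≤ C * (1 + 2 / (1 - (1 / 2) ^ α)) * t ^ α := by
  have hr : (1 / 2 : ℝ) ^ α < 1 := Real.rpow_lt_one (by norm_num) (by norm_num) hα
  have hscale : Tendsto (fun n : ℕ => t * (1 / 2) ^ n) atTop (𝓝[>] 0) := by
    refine tendsto_nhdsWithin_iff.2
      ⟨?_, .of_forall fun n => mem_Ioi.2 (mul_pos ht.1 (by positivity))⟩
    simpa using (tendsto_pow_atTop_nhds_zero_of_lt_one (r := (1 / 2 : ℝ)) (by norm_num)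
      (by norm_num)).const_mul t
  have hlimit (z : X) (hz : z ∈ A) :
      dist (m z t) (u z) ≤ C * t ^ α / (1 - (1 / 2) ^ α) := by
    have hstep (n : ℕ) : dist (m z (t * (1 / 2) ^ n)) (m z (t * (1 / 2) ^ (n + 1))) ≤
        C * t ^ α * ((1 / 2) ^ α) ^ n := by
      have htn : 0 < t * (1 / 2) ^ n := mul_pos ht.1 (by positivity)
      have htn1 : t * (1 / 2) ^ n ≤ 1 :=
        mul_le_one₀ ht.2 (by positivity) (pow_le_one₀ (by norm_num) (by norm_num))
      refine (hm z hz z hz _ ⟨htn, htn1⟩ _ ⟨?_, ?_⟩ (by rw [dist_self]; positivity)).trans_eq ?_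
      · rw [pow_succ]; linarith
      · rw [pow_succ]; linarith
      · rw [Real.mul_rpow ht.1.le (by positivity), Real.rpow_pow_comm (by norm_num), mul_assoc]
    simpa using dist_le_of_le_geometric_of_tendsto₀ _ _ hr hstep ((hlim z hz).comp hscale)
  calc dist (u x) (u y) ≤ dist (m x t) (u x) + dist (m x t) (m y t) + dist (m y t) (u y) := by
        rw [dist_comm (m x t) (u x)]
        exact dist_triangle4 _ _ _ _
    _ ≤ C * t ^ α / (1 - (1 / 2) ^ α) + C * t ^ α + C * t ^ α / (1 - (1 / 2) ^ α) := by
        gcongr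
        · exact hlimit x hx
        · exact hm x hx y hy t ht t ⟨half_le_self ht.1.le, le_rfl⟩ hxy
        · exact hlimit y hy
    _ = C * (1 + 2 / (1 - (1 / 2) ^ α)) * t ^ α := by ring

theorem holderOnWith_of_dist_le {X Y : Type*} [PseudoMetricSpace X] [PseudoMetricSpace Y]
    {C r : ℝ≥0} {f : X → Y} {A : Set X}
    (h : ∀ x ∈ A, ∀ y ∈ A, dist (f x) (f y) ≤ C * dist x y ^ (r : ℝ)) : HolderOnWith C r f A := by
  intro x hx y hy
  rw [edist_dist, edist_dist, ENNReal.ofReal_rpow_of_nonneg dist_nonneg r.coe_nonneg,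
    ← ENNReal.ofReal_coe_nnreal, ← ENNReal.ofReal_mul C.coe_nonneg]
  exact ENNReal.ofReal_le_ofReal (h x hx y hy)

theorem exists_holderOnWith_of_gagliardoE_le {l ν : ℕ} {s p : ℝ}
    {A : Set (EuclideanSpace ℝ (Fin l))} (hp : 1 ≤ p) (hsp : l < s * p) (hA : Convex ℝ A)
    (hAcpt : IsCompact A) (hA0 : volume A ≠ 0) (M : ℝ≥0) :
    ∃ C : ℝ≥0, ∀ u : EuclideanSpace ℝ (Fin l) → EuclideanSpace ℝ (Fin ν),
      ContinuousOn u A → gagliardoE s p A u ≤ M → HolderOnWith C (s - l / p).toNNReal u A := by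
  have hp0 : 0 < p := one_pos.trans_le hp
  have hsp0 : 0 ≤ l + s * p := add_nonneg l.cast_nonneg (l.cast_nonneg.trans hsp.le)
  have hα : 0 < s - l / p := by rwa [sub_pos, div_lt_iff₀ hp0]
  have hr : (1 / 2 : ℝ) ^ (s - l / p) < 1 := Real.rpow_lt_one (by norm_num) (by norm_num) hα
  set D := diam A + 1
  have hD0 : 0 < D := by positivity
  have hD : ∀ x ∈ A, ∀ y ∈ A, dist x y ≤ D := fun x hx y hy =>
    (dist_le_diam_of_mem hAcpt.isBounded hx hy).trans (le_add_of_nonneg_right zero_le_one)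
  set C := ((3 * D) ^ (l + s * p) * 2 ^ l * M / volume.real A ^ 2) ^ (1 / p)
  set K := C * (1 + 2 / (1 - (1 / 2) ^ (s - l / p))) / D ^ (s - l / p)
  have hK : 0 ≤ K := by
    have := sub_pos.2 hr
    positivity
  refine ⟨K.toNNReal, fun u hu hM => holderOnWith_of_dist_le fun x hx y hy => ?_⟩
  rw [Real.coe_toNNReal _ hK, Real.coe_toNNReal _ hα.le]
  obtain rfl | hne := eq_or_ne x y
  · rw [dist_self]
    positivity
  have ht : dist x y / D ∈ Ioc (0 : ℝ) 1 :=
    ⟨div_pos (dist_pos.2 hne) hD0, (div_le_one hD0).2 (hD x hx y hy)⟩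
  refine (dist_le_of_tendsto_of_dist_le_rpow hα hD0.le
    (fun x hx y hy t ht t' ht' =>
      dist_homothetyAverage_le_mul_rpow hp hsp0 hA hAcpt hA0 hu hM hD hx hy ht ht')
    (fun x hx => tendsto_homothetyAverage hA hAcpt hA0 hu hx) hx hy ht
    (mul_div_cancel₀ _ hD0.ne').ge).trans_eq ?_
  rw [Real.div_rpow dist_nonneg hD0.le]
  ring

theorem exists_ne_forall_dist_lt_of_equicontinuousOn {ι X Y : Type*} [Infinite ι]
    [TopologicalSpace X] [MetricSpace Y] {A : Set X} (hA : IsCompact A) {N : Set Y}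
    (hN : IsCompact N) {f : ι → X → Y} (hfN : ∀ i, MapsTo (f i) A N) (hf : EquicontinuousOn f A)
    {ε : ℝ} (hε : 0 < ε) : ∃ i j, i ≠ j ∧ ∀ x ∈ A, dist (f i x) (f j x) < ε := by
  have := isCompact_iff_compactSpace.1 hA
  let F (i : ι) : BoundedContinuousFunction A Y :=
    .mkOfCompact ⟨A.domRestrict (f i), (hf.continuousOn i).domRestrict⟩
  have hequi : Equicontinuous fun i => (F i : A → Y) := (equicontinuous_restrict_iff f).2 hf
  have hbounded : TotallyBounded (range F) := by
    refine (BoundedContinuousFunction.arzela_ascoli N hN (range F) ?_ ?_).totallyBounded.subset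
      subset_closure
    · rintro _ x ⟨i, rfl⟩
      exact hfN i x.2
    · rintro x U hU
      filter_upwards [hequi x U hU] with y hy
      rintro ⟨_, i, rfl⟩
      exact hy i
  obtain ⟨T, hT, hcover⟩ := Metric.totallyBounded_iff.1 hbounded (ε / 2) (half_pos hε)
  have hcenter (i : ι) : ∃ g : T, dist (F i) g < ε / 2 := by
    obtain ⟨g, hg, hig⟩ := mem_iUnion₂.1 (hcover (mem_range_self i))
    exact ⟨⟨g, hg⟩, hig⟩
  choose center hcenter using hcenter
  have := hT.to_subtype
  obtain ⟨i, j, hij, hcenter_eq⟩ := Finite.exists_ne_map_eq_of_infinite center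
  have hFij : dist (F i) (F j) < ε := by
    have hj := hcenter_eq ▸ hcenter j
    exact (dist_triangle_right _ _ _).trans_lt (by linarith [hcenter i])
  exact ⟨i, j, hij, fun x hx => (BoundedContinuousFunction.dist_coe_le_dist ⟨x, hx⟩).trans_lt hFij⟩

theorem uniformEquicontinuous_of_holderWith {ι X Y : Type*} [PseudoMetricSpace X]
    [PseudoMetricSpace Y] {f : ι → X → Y} {C r : ℝ≥0} (hr : 0 < r)
    (hf : ∀ i, HolderWith C r (f i)) : UniformEquicontinuous f := by
  refine Metric.uniformEquicontinuous_of_continuity_modulus (fun t => C * t ^ (r : ℝ)) ?_ f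
    fun x y i => (hf i).dist_le x y
  have hmod : ContinuousAt (fun t : ℝ => C * t ^ (r : ℝ)) 0 :=
    (Real.continuousAt_rpow_const _ _ (.inr r.coe_nonneg)).const_mul _
  simpa [hr.ne'] using hmod.tendsto

theorem equicontinuousOn_of_holderOnWith {ι X Y : Type*} [PseudoMetricSpace X]
    [PseudoMetricSpace Y] {A : Set X} {f : ι → X → Y} {C r : ℝ≥0} (hr : 0 < r)
    (hf : ∀ i, HolderOnWith C r (f i) A) : EquicontinuousOn f A :=
  (equicontinuous_restrict_iff f).1
    (uniformEquicontinuous_of_holderWith hr fun i =>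
      HolderWith.restrict_iff.2 (hf i)).equicontinuous

theorem exists_ne_homotopicRelSphere_of_gagliardoE_le {ι : Type*} [Infinite ι] {ν l : ℕ}
    {N : Set (EuclideanSpace ℝ (Fin ν))} (hNcpt : IsCompact N) (hNret : IsNeighborhoodRetract N)
    {s p : ℝ} (hp : 1 ≤ p) (hsp : l < s * p)
    {w : ι → EuclideanSpace ℝ (Fin l) → EuclideanSpace ℝ (Fin ν)}
    (hwc : ∀ i, ContinuousOn (w i) (closedBall 0 1)) (hwN : ∀ i, MapsTo (w i) (closedBall 0 1) N)
    (hwb : ∀ i j, EqOn (w i) (w j) (sphere 0 1)) {M : ℝ≥0}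
    (hM : ∀ i, gagliardoE s p (ball 0 1) (w i) ≤ M) :
    ∃ i j, i ≠ j ∧ HomotopicRelSphere N (w i) (w j) := by
  obtain ⟨ε, hε, hhomotopic⟩ := hNret.exists_homotopicRelSphere_of_dist_lt hNcpt l
  obtain ⟨C, hC⟩ := exists_holderOnWith_of_gagliardoE_le (ν := ν) hp hsp
    (convex_closedBall (0 : EuclideanSpace ℝ (Fin l)) 1) (isCompact_closedBall 0 1)
    (measure_closedBall_pos volume 0 one_pos).ne' M
  have hr : 0 < (s - l / p).toNNReal :=
    Real.toNNReal_pos.2 (sub_pos.2 ((div_lt_iff₀ (one_pos.trans_le hp)).2 hsp))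
  have hequi : EquicontinuousOn w (closedBall 0 1) := equicontinuousOn_of_holderOnWith hr fun i =>
    hC (w i) (hwc i) ((gagliardoE_congr_ae (ball_ae_eq_closedBall volume 0 one_ne_zero)).ge.trans
      (hM i))
  obtain ⟨i, j, hij, hdist⟩ := exists_ne_forall_dist_lt_of_equicontinuousOn
    (isCompact_closedBall 0 1) hNcpt hwN hequi hε
  exact ⟨i, j, hij, hhomotopic _ _ (hwc i) (hwc j) (hwN i) (hwN j) (hwb i j) hdist⟩

theorem statement8_general {ι : Type*} {ν l : ℕ} {N : Set (EuclideanSpace ℝ (Fin ν))}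
    (hNcpt : IsCompact N) (hNret : IsNeighborhoodRetract N) {s p : ℝ} (hp : 1 ≤ p)
    (hsp : l < s * p) {w : ι → EuclideanSpace ℝ (Fin l) → EuclideanSpace ℝ (Fin ν)}
    (hwc : ∀ i, ContinuousOn (w i) (closedBall 0 1)) (hwN : ∀ i, MapsTo (w i) (closedBall 0 1) N)
    (hwb : ∀ i j, EqOn (w i) (w j) (sphere 0 1))
    (hpairwise : Pairwise fun i j => ¬ HomotopicRelSphere N (w i) (w j)) :
    Tendsto (fun i => gagliardoE s p (ball 0 1) (w i)) cofinite (𝓝 ∞) := by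
  refine ENNReal.tendsto_nhds_top_iff_nnreal.2 fun M => eventually_cofinite.2 ?_
  by_contra hinf
  have := Set.Infinite.to_subtype hinf
  obtain ⟨i, j, hij, hhomotopic⟩ := exists_ne_homotopicRelSphere_of_gagliardoE_le hNcpt hNret hp hsp
    (w := fun i : {i | ¬ M < gagliardoE s p (ball 0 1) (w i)} => w i) (fun i => hwc i)
    (fun i => hwN i) (fun i j => hwb i j) fun i => not_lt.1 i.2
  exact hpairwise (Subtype.coe_ne_coe.2 hij) hhomotopic

/-- if `p > ℓ + 1` and `(w_j)` are continuous maps `B̄^ℓ → N`, equal to `b` on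
`S^{ℓ-1}` and pairwise non-homotopic relative to `S^{ℓ-1}`, then their `W^{1-1/p,p}` Gagliardo
energies tend to `∞`. -/
theorem statement8 (ν : ℕ) (hν : 1 ≤ ν) (N : Set (EuclideanSpace ℝ (Fin ν)))
    (hNcpt : IsCompact N) (hNconn : IsConnected N) (hNsub : IsSmoothSubmanifold N)
    (b : EuclideanSpace ℝ (Fin ν)) (hb : b ∈ N)
    (l : ℕ) (hl : 1 ≤ l) (p : ℝ) (hp : (l : ℝ) + 1 < p)
    (w : ℕ → EuclideanSpace ℝ (Fin l) → EuclideanSpace ℝ (Fin ν))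
    (hwc : ∀ j, ContinuousOn (w j) (closedBall 0 1))
    (hwN : ∀ j, MapsTo (w j) (closedBall 0 1) N)
    (hwb : ∀ j, ∀ x ∈ sphere (0 : EuclideanSpace ℝ (Fin l)) 1, w j x = b)
    (hpairwise : ∀ j k : ℕ, j ≠ k → ¬ HomotopicRelSphere N (w j) (w k)) :
    ∀ M : ℝ, 0 < M → ∃ J : ℕ, ∀ j, J ≤ j →
      ENNReal.ofReal M ≤ gagliardoE (1 - 1 / p) p (ball 0 1) (w j) := by
  have hsp : l < (1 - 1 / p) * p := by rw [one_sub_mul, div_mul_cancel₀ _ (by linarith)]; linarith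
  have hlim := statement8_general hNcpt (hNsub.hasLocallyPositiveReach.isNeighborhoodRetract hNcpt)
    (by linarith) hsp hwc hwN (fun i j x hx => (hwb i x hx).trans (hwb j x hx).symm) hpairwise
  rw [Nat.cofinite_eq_atTop] at hlim
  exact fun M _ => eventually_atTop.1 (hlim.eventually_const_le ENNReal.ofReal_lt_top)

end
end

section
/- Let ℓ ≥ 1, ν ≥ 1 and 1 < p < ∞. There exists a constant C > 0, depending only on ℓ, p and ν, such that for every C^1 map u : B̄^ℓ → ℝ^ν one has ∬_{B^ℓ×B^ℓ} |u(y) − u(x)|^p / |y − x|^{ℓ + p − 1} dy dx ≤ C · ( ∫_{B^ℓ} ‖Du(x)‖^p dx )^{(p−1)/p} · sup_{x ∈ B̄^ℓ} |u(x)|. -/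
open Metric Set MeasureTheory
open scoped ENNReal

noncomputable section

/-!
Split the pairs `(x, y)` at a distance `δ`. For near pairs, `u y - u x` is the integral of
`Du (y - x)` along the segment; Jensen's inequality, Fubini and translation invariance bound their
contribution by a multiple of `δ ^ ((1 - σ) * p) * ∫ ‖Du‖ ^ p`. For far pairs, `‖u y - u x‖ ≤ 2 * M`
gives a multiple of `δ ^ (-σ * p) * M ^ p`. Choosing `δ` so that the two contributions balance gives
the inequality for every order `0 < σ < 1`, and the theorem is the case `σ = 1 - 1 / p`.
-/

open Module Filter Topology

lemma rpow_lintegral_le_lintegral_rpow {α : Type*} [MeasurableSpace α] {ρ : Measure α}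
    [IsProbabilityMeasure ρ] {f : α → ℝ≥0∞} (hf : AEMeasurable f ρ) {p : ℝ} (hp : 1 ≤ p) :
    (∫⁻ a, f a ∂ρ) ^ p ≤ ∫⁻ a, f a ^ p ∂ρ := by
  have hLp := eLpNorm'_le_eLpNorm'_of_exponent_le one_pos hp ρ hf.aestronglyMeasurable
  simp only [eLpNorm'_eq_lintegral_enorm, enorm_eq_self, ENNReal.rpow_one, div_one] at hLp
  rwa [one_div, ENNReal.le_rpow_inv_iff (one_pos.trans_le hp)] at hLp

lemma measurable_indicator_of_continuousOn {X Y : Type*} [TopologicalSpace X] [MeasurableSpace X]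
    [OpensMeasurableSpace X] [TopologicalSpace Y] [MeasurableSpace Y] [BorelSpace Y] [Zero Y]
    {f : X → Y} {s : Set X} (hf : ContinuousOn f s) (hs : MeasurableSet s) :
    Measurable (s.indicator f) := by
  classical
  rw [← piecewise_eq_indicator]
  exact hf.measurable_piecewise continuous_zero.continuousOn hs

section MeanValue

variable {E F : Type*} [NormedAddCommGroup E] [NormedSpace ℝ E] [NormedAddCommGroup F]
  [NormedSpace ℝ F] {u : E → F} {s : Set E} {x y : E}

lemma enorm_sub_le_lintegral_enorm_fderiv (hs : IsOpen s) (hu : ContDiffOn ℝ 1 u s)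
    (hxy : segment ℝ x y ⊆ s) :
    ‖u y - u x‖ₑ ≤ ∫⁻ t in Icc (0 : ℝ) 1, ‖fderiv ℝ u (x + t • (y - x))‖ₑ * ‖y - x‖ₑ := by
  have hmem : MapsTo (fun t : ℝ => x + t • (y - x)) (Icc 0 1) s :=
    mapsTo_iff_image_subset.2 (segment_eq_image' ℝ x y ▸ hxy)
  have hline : ContDiffOn ℝ 1 (fun t : ℝ => u (x + t • (y - x))) (Icc 0 1) :=
    hu.comp (ContDiff.contDiffOn (by fun_prop)) hmem
  have hderiv : ∀ t ∈ Icc (0 : ℝ) 1,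
      deriv (fun t : ℝ => u (x + t • (y - x))) t = fderiv ℝ u (x + t • (y - x)) (y - x) := by
    intro t ht
    have hdiff : DifferentiableAt ℝ u (x + t • (y - x)) :=
      (hu.contDiffAt (hs.mem_nhds (hmem ht))).differentiableAt one_ne_zero
    have hseg : HasDerivAt (fun t : ℝ => x + t • (y - x)) (y - x) t := by
      simpa using ((hasDerivAt_id t).smul_const (y - x)).const_add x
    exact (hdiff.hasFDerivAt.comp_hasDerivAt t hseg).deriv
  calc ‖u y - u x‖ₑ
      ≤ ∫⁻ t in Icc (0 : ℝ) 1, ‖deriv (fun t : ℝ => u (x + t • (y - x))) t‖ₑ := by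
        simpa using enorm_sub_le_lintegral_deriv_of_contDiffOn_Icc hline zero_le_one
    _ ≤ ∫⁻ t in Icc (0 : ℝ) 1, ‖fderiv ℝ u (x + t • (y - x))‖ₑ * ‖y - x‖ₑ :=
        setLIntegral_mono' measurableSet_Icc fun t ht =>
          hderiv t ht ▸ ContinuousLinearMap.le_opENorm _ _

lemma ofReal_norm_sub_rpow_le_lintegral_fderiv (hs : IsOpen s) (hu : ContDiffOn ℝ 1 u s)
    (hxy : segment ℝ x y ⊆ s) {p : ℝ} (hp : 1 ≤ p) :
    ENNReal.ofReal (‖u y - u x‖ ^ p) ≤ ENNReal.ofReal (‖y - x‖ ^ p) *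
      ∫⁻ t in Icc (0 : ℝ) 1, ENNReal.ofReal (‖fderiv ℝ u (x + t • (y - x))‖ ^ p) := by
  have hp0 : 0 ≤ p := zero_le_one.trans hp
  have hmem : MapsTo (fun t : ℝ => x + t • (y - x)) (Icc 0 1) s :=
    mapsTo_iff_image_subset.2 (segment_eq_image' ℝ x y ▸ hxy)
  have hmeas : AEMeasurable (fun t : ℝ => ‖fderiv ℝ u (x + t • (y - x))‖ₑ)
      (volume.restrict (Icc 0 1)) := by
    refine (ContinuousOn.enorm ?_).aemeasurable measurableSet_Icc
    exact (hu.continuousOn_fderiv_of_isOpen hs le_rfl).comp (by fun_prop) hmem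
  have : IsProbabilityMeasure (volume.restrict (Icc (0 : ℝ) 1)) := ⟨by simp⟩
  simp only [← ENNReal.ofReal_rpow_of_nonneg (norm_nonneg _) hp0, ofReal_norm]
  calc ‖u y - u x‖ₑ ^ p
      ≤ ((∫⁻ t in Icc (0 : ℝ) 1, ‖fderiv ℝ u (x + t • (y - x))‖ₑ) * ‖y - x‖ₑ) ^ p := by
        rw [← lintegral_mul_const'' _ hmeas]
        gcongr
        exact enorm_sub_le_lintegral_enorm_fderiv hs hu hxy
    _ = ‖y - x‖ₑ ^ p * (∫⁻ t in Icc (0 : ℝ) 1, ‖fderiv ℝ u (x + t • (y - x))‖ₑ) ^ p := by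
        rw [ENNReal.mul_rpow_of_nonneg _ _ hp0, mul_comm]
    _ ≤ _ := by
        gcongr
        exact rpow_lintegral_le_lintegral_rpow hmeas hp

end MeanValue

section Translation

lemma setLIntegral_setLIntegral_comp_sub_le {G : Type*} [MeasurableSpace G] [AddGroup G]
    [MeasurableAdd G] (μ : Measure G) [μ.IsAddRightInvariant] (w : G → ℝ≥0∞) (s : Set G) :
    ∫⁻ x in s, ∫⁻ y in s, w (y - x) ∂μ ∂μ ≤ (∫⁻ h, w h ∂μ) * μ s := by
  rw [← setLIntegral_const]
  refine lintegral_mono fun x => ?_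
  exact (setLIntegral_le_lintegral _ _).trans_eq (lintegral_sub_right_eq_self (μ := μ) w x)

variable {E : Type*} [NormedAddCommGroup E] [NormedSpace ℝ E] [MeasurableSpace E] [BorelSpace E]
  [SecondCountableTopology E] {μ : Measure E} [SFinite μ] [μ.IsAddRightInvariant]
  {w g : E → ℝ≥0∞}

lemma lintegral_lintegral_mul_segment (hw : Measurable w) (hg : Measurable g) (ρ : Measure ℝ)
    [IsProbabilityMeasure ρ] :
    ∫⁻ x, ∫⁻ y, w (y - x) * ∫⁻ t, g (x + t • (y - x)) ∂ρ ∂μ ∂μ =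
      (∫⁻ h, w h ∂μ) * ∫⁻ x, g x ∂μ := by
  have hmeas_line (h : E) : Measurable fun z : E × ℝ => g (z.1 + z.2 • h) :=
    hg.comp (by fun_prop)
  have hmeas_pair : Measurable fun z : (E × E) × ℝ => g (z.1.1 + z.2 • z.1.2) :=
    hg.comp (by fun_prop)
  have hmeas : Measurable fun z : E × E => w z.2 * ∫⁻ t, g (z.1 + t • z.2) ∂ρ :=
    (hw.comp measurable_snd).mul hmeas_pair.lintegral_prod_right'
  have hline (h : E) : ∫⁻ x, ∫⁻ t, g (x + t • h) ∂ρ ∂μ = ∫⁻ x, g x ∂μ := by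
    rw [lintegral_lintegral_swap (hmeas_line h).aemeasurable]
    simp_rw [lintegral_add_right_eq_self g, lintegral_const, measure_univ, mul_one]
  calc ∫⁻ x, ∫⁻ y, w (y - x) * ∫⁻ t, g (x + t • (y - x)) ∂ρ ∂μ ∂μ
      = ∫⁻ x, ∫⁻ h, w h * ∫⁻ t, g (x + t • h) ∂ρ ∂μ ∂μ :=
        lintegral_congr fun x =>
          lintegral_sub_right_eq_self (fun h => w h * ∫⁻ t, g (x + t • h) ∂ρ) x
    _ = ∫⁻ h, ∫⁻ x, w h * ∫⁻ t, g (x + t • h) ∂ρ ∂μ ∂μ :=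
        lintegral_lintegral_swap hmeas.aemeasurable
    _ = ∫⁻ h, w h * ∫⁻ x, g x ∂μ ∂μ := lintegral_congr fun h => by
        rw [lintegral_const_mul _ (hmeas_line h).lintegral_prod_right', hline]
    _ = (∫⁻ h, w h ∂μ) * ∫⁻ x, g x ∂μ := lintegral_mul_const _ hw

end Translation

section RadialKernel

variable {E : Type*} [NormedAddCommGroup E] [NormedSpace ℝ E]

/-- The kernel `‖h‖ ^ (q - d)`, with `d` the dimension of `E`, restricted to those `h` whose norm
lies in `I`; the exponent is normalised so that its integral is that of `r ^ (q - 1)` over `I`. -/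
def radialKernel (I : Set ℝ) (q : ℝ) : E → ℝ≥0∞ :=
  (norm ⁻¹' I).indicator fun h => ENNReal.ofReal (‖h‖ ^ (q - finrank ℝ E))

variable [MeasurableSpace E] [BorelSpace E]

lemma measurable_radialKernel {I : Set ℝ} (hI : MeasurableSet I) (q : ℝ) :
    Measurable (radialKernel I q : E → ℝ≥0∞) :=
  Measurable.indicator (by fun_prop) (measurable_norm hI)

variable [FiniteDimensional ℝ E] [Nontrivial E] (μ : Measure E) [μ.IsAddHaarMeasure]

lemma lintegral_radialKernel {I : Set ℝ} (hI : MeasurableSet I) (hIpos : I ⊆ Ioi 0) {q : ℝ}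
    (hint : IntegrableOn (fun r : ℝ => r ^ (q - 1)) I) :
    ∫⁻ h, radialKernel I q h ∂μ =
      ENNReal.ofReal (μ.toSphere.real univ * ∫ r in I, r ^ (q - 1)) := by
  set f : ℝ → ℝ := I.indicator fun r => r ^ (q - finrank ℝ E)
  have hf : ∀ r, 0 ≤ f r := indicator_nonneg fun r hr => Real.rpow_nonneg (hIpos hr).le _
  have hker : ∀ h : E, radialKernel I q h = ENNReal.ofReal (f ‖h‖) := fun h => by
    by_cases hh : ‖h‖ ∈ I <;> simp [radialKernel, f, hh]
  have hpolar : (fun r => r ^ (finrank ℝ E - 1) • f r) = I.indicator fun r => r ^ (q - 1) := by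
    funext r
    by_cases hr : r ∈ I
    · simp only [f, indicator_of_mem hr, smul_eq_mul]
      rw [← Real.rpow_natCast, ← Real.rpow_add (hIpos hr), Nat.cast_pred finrank_pos]
      congr 1
      ring
    · simp [f, hr]
  have hfint : Integrable (fun h : E => f ‖h‖) μ := by
    rw [integrable_fun_norm_addHaar, hpolar]
    exact ((integrable_indicator_iff hI).2 hint).integrableOn
  simp_rw [hker]
  rw [← ofReal_integral_eq_lintegral_ofReal hfint (.of_forall fun h => hf _),
    integral_fun_norm_addHaar, hpolar, setIntegral_indicator hI, inter_eq_right.2 hIpos,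
    nsmul_eq_mul, smul_eq_mul, ← mul_assoc, μ.toSphere_real_apply_univ]

lemma lintegral_radialKernel_Ioc {q δ : ℝ} (hq : 0 < q) (hδ : 0 < δ) :
    ∫⁻ h, radialKernel (Ioc 0 δ) q h ∂μ =
      ENNReal.ofReal (μ.toSphere.real univ * (δ ^ q / q)) := by
  have hint : IntervalIntegrable (fun r : ℝ => r ^ (q - 1)) volume 0 δ :=
    intervalIntegral.intervalIntegrable_rpow' (by linarith)
  rw [lintegral_radialKernel μ measurableSet_Ioc Ioc_subset_Ioi_self
    ((intervalIntegrable_iff_integrableOn_Ioc_of_le hδ.le).1 hint),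
    ← intervalIntegral.integral_of_le hδ.le, integral_rpow (.inl (by linarith)),
    sub_add_cancel, Real.zero_rpow hq.ne', sub_zero]

lemma lintegral_radialKernel_Ioi {q δ : ℝ} (hq : 0 < q) (hδ : 0 < δ) :
    ∫⁻ h, radialKernel (Ioi δ) (-q) h ∂μ =
      ENNReal.ofReal (μ.toSphere.real univ * (δ ^ (-q) / q)) := by
  have hlt : -q - 1 < -1 := by linarith
  rw [lintegral_radialKernel μ measurableSet_Ioi (Ioi_subset_Ioi hδ.le)
    (integrableOn_Ioi_rpow_of_lt hlt hδ), integral_Ioi_rpow_of_lt hlt hδ, sub_add_cancel,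
    neg_div_neg_eq]

end RadialKernel

section Optimization

lemma le_rpow_mul_rpow_of_forall_pos_le {x A : ℝ≥0∞} {K L B σ : ℝ} (hK : 0 < K) (hL : 0 ≤ L)
    (hB : 0 < B) (hσ : 0 < σ)
    (h : ∀ t : ℝ, 0 < t →
      x ≤ ENNReal.ofReal (K * t ^ (1 - σ)) * A + ENNReal.ofReal (L * t ^ (-σ) * B)) :
    x ≤ ENNReal.ofReal (K + L) * A ^ σ * ENNReal.ofReal (B ^ (1 - σ)) := by
  have hKL : 0 < K + L := by positivity
  rcases eq_or_ne A ∞ with rfl | hA_top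
  · have htop : ENNReal.ofReal (K + L) * ∞ ^ σ * ENNReal.ofReal (B ^ (1 - σ)) = ∞ := by
      rw [ENNReal.top_rpow_of_pos hσ, ENNReal.mul_top (ENNReal.ofReal_pos.2 hKL).ne',
        ENNReal.top_mul (ENNReal.ofReal_pos.2 (by positivity)).ne']
    exact le_top.trans_eq htop.symm
  rcases eq_or_ne A 0 with rfl | hA_zero
  · have hlim : Tendsto (fun t : ℝ => ENNReal.ofReal (L * t ^ (-σ) * B)) atTop (𝓝 0) := by
      simpa using ENNReal.tendsto_ofReal
        (((tendsto_rpow_neg_atTop hσ).const_mul L).mul_const B)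
    refine (ge_of_tendsto hlim ?_).trans zero_le
    filter_upwards [eventually_gt_atTop 0] with t ht
    simpa using h t ht
  obtain ⟨a, rfl⟩ : ∃ a : NNReal, A = a := ⟨_, (ENNReal.coe_toNNReal hA_top).symm⟩
  have ha : (0 : ℝ) < a := NNReal.coe_pos.2 (pos_iff_ne_zero.2 (by simpa using hA_zero))
  -- `t = B / a` balances the two terms.
  have hnear : (B / a) ^ (1 - σ) * a = a ^ σ * B ^ (1 - σ) := by
    rw [Real.div_rpow hB.le ha.le, Real.rpow_sub ha, Real.rpow_one]
    field_simp
  have hfar : (B / a) ^ (-σ) * B = a ^ σ * B ^ (1 - σ) := by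
    rw [Real.div_rpow hB.le ha.le, Real.rpow_neg hB.le, Real.rpow_neg ha.le, Real.rpow_sub hB,
      Real.rpow_one]
    field_simp
  refine (h (B / a) (by positivity)).trans_eq ?_
  rw [← ENNReal.ofReal_coe_nnreal, ENNReal.ofReal_rpow_of_pos ha,
    ← ENNReal.ofReal_mul (by positivity), ← ENNReal.ofReal_mul (by positivity),
    ← ENNReal.ofReal_mul (by positivity), ← ENNReal.ofReal_add (by positivity) (by positivity)]
  congr 1
  linear_combination K * hnear + L * hfar

end Optimization

section Integrand

variable {E F : Type*} [NormedAddCommGroup E] [NormedSpace ℝ E] [NormedAddCommGroup F]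
  {u : E → F} {s : Set E} {x y : E} {σ p M : ℝ}

lemma gagliardo_integrand_le_of_norm_le (hx : ‖u x‖ ≤ M) (hy : ‖u y‖ ≤ M) (hp : 0 ≤ p) :
    ENNReal.ofReal (‖u y - u x‖ ^ p / ‖y - x‖ ^ (finrank ℝ E + σ * p)) ≤
      ENNReal.ofReal ((2 * M) ^ p) * ENNReal.ofReal (‖y - x‖ ^ (-(σ * p) - finrank ℝ E)) := by
  have hosc : ‖u y - u x‖ ≤ 2 * M := (norm_sub_le _ _).trans (by linarith)
  have hM : 0 ≤ 2 * M := (norm_nonneg _).trans hosc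
  rw [← ENNReal.ofReal_mul (by positivity), ← neg_add', Real.rpow_neg (norm_nonneg _),
    ← div_eq_mul_inv, add_comm (σ * p)]
  gcongr

variable [NormedSpace ℝ F]

lemma gagliardo_integrand_le_lintegral_fderiv (hs : IsOpen s) (hu : ContDiffOn ℝ 1 u s)
    (hsegment : segment ℝ x y ⊆ s) (hxy : y ≠ x) (hp : 1 ≤ p) :
    ENNReal.ofReal (‖u y - u x‖ ^ p / ‖y - x‖ ^ (finrank ℝ E + σ * p)) ≤
      ENNReal.ofReal (‖y - x‖ ^ ((1 - σ) * p - finrank ℝ E)) *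
        ∫⁻ t in Icc (0 : ℝ) 1, ENNReal.ofReal (‖fderiv ℝ u (x + t • (y - x))‖ ^ p) := by
  have hpos : 0 < ‖y - x‖ := norm_pos_iff.2 (sub_ne_zero.2 hxy)
  have hexp : ‖y - x‖ ^ ((1 - σ) * p - finrank ℝ E) =
      (‖y - x‖ ^ (finrank ℝ E + σ * p))⁻¹ * ‖y - x‖ ^ p := by
    rw [← Real.rpow_neg hpos.le, ← Real.rpow_add hpos]
    congr 1
    ring
  rw [hexp, div_eq_inv_mul, ENNReal.ofReal_mul (by positivity), ENNReal.ofReal_mul (by positivity),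
    mul_assoc]
  gcongr
  exact ofReal_norm_sub_rpow_le_lintegral_fderiv hs hu hsegment hp

lemma gagliardo_integrand_le_near_add_far (hs : IsOpen s) (hconv : Convex ℝ s)
    (hu : ContDiffOn ℝ 1 u s) (hM : ∀ x ∈ s, ‖u x‖ ≤ M) (hp : 1 ≤ p) (δ : ℝ)
    (hx : x ∈ s) (hy : y ∈ s) :
    ENNReal.ofReal (‖u y - u x‖ ^ p / ‖y - x‖ ^ (finrank ℝ E + σ * p)) ≤
      radialKernel (Ioc 0 δ) ((1 - σ) * p) (y - x) *
          (∫⁻ t in Icc (0 : ℝ) 1,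
            s.indicator (fun z => ENNReal.ofReal (‖fderiv ℝ u z‖ ^ p)) (x + t • (y - x))) +
        ENNReal.ofReal ((2 * M) ^ p) * radialKernel (Ioi δ) (-(σ * p)) (y - x) := by
  rcases eq_or_ne y x with rfl | hxy
  · simp [Real.zero_rpow (one_pos.trans_le hp).ne']
  rcases le_or_gt ‖y - x‖ δ with hnear | hfar
  · have hmem : y - x ∈ norm ⁻¹' Ioc 0 δ := ⟨norm_pos_iff.2 (sub_ne_zero.2 hxy), hnear⟩
    have hindicator : ∫⁻ t in Icc (0 : ℝ) 1,
        s.indicator (fun z => ENNReal.ofReal (‖fderiv ℝ u z‖ ^ p)) (x + t • (y - x)) =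
        ∫⁻ t in Icc (0 : ℝ) 1, ENNReal.ofReal (‖fderiv ℝ u (x + t • (y - x))‖ ^ p) :=
      setLIntegral_congr_fun measurableSet_Icc fun t ht =>
        indicator_of_mem (hconv.add_smul_sub_mem hx hy ht) _
    rw [hindicator, radialKernel, indicator_of_mem hmem]
    exact (gagliardo_integrand_le_lintegral_fderiv hs hu (hconv.segment_subset hx hy) hxy hp).trans
      le_self_add
  · rw [radialKernel.eq_def (Ioi δ), indicator_of_mem (show y - x ∈ norm ⁻¹' Ioi δ from hfar)]
    exact (gagliardo_integrand_le_of_norm_le (hM x hx) (hM y hy) (zero_le_one.trans hp)).trans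
      le_add_self

end Integrand

section Energy

variable {E F : Type*} [NormedAddCommGroup E] [NormedSpace ℝ E] [MeasurableSpace E]
  [NormedAddCommGroup F]

/-- The Gagliardo energy `E^{σ,p}` of `u` on `s`, the `p`-th power of the fractional Sobolev
seminorm of order `σ`. -/
def gagliardoEnergy (μ : Measure E) (s : Set E) (σ p : ℝ) (u : E → F) : ℝ≥0∞ :=
  ∫⁻ x in s, ∫⁻ y in s,
    ENNReal.ofReal (‖u y - u x‖ ^ p / ‖y - x‖ ^ (finrank ℝ E + σ * p)) ∂μ ∂μ

/-- The Dirichlet energy `E^{1,p}` of `u` on `s`, with the operator norm of the derivative. -/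
def dirichletEnergy (μ : Measure E) (s : Set E) (p : ℝ) [NormedSpace ℝ F]
    (u : E → F) : ℝ≥0∞ :=
  ∫⁻ x in s, ENNReal.ofReal (‖fderiv ℝ u x‖ ^ p) ∂μ

/-- The constant of the fractional Gagliardo–Nirenberg inequality on `s`; its two summands come
from the pairs at small and at large distance. -/
def gagliardoNirenbergConst (μ : Measure E) (s : Set E) (σ p : ℝ) : ℝ :=
  μ.toSphere.real univ / ((1 - σ) * p) + 2 ^ p * μ.real s * μ.toSphere.real univ / (σ * p)

variable {μ : Measure E} {s : Set E} {u : E → F} {σ p M : ℝ}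

lemma gagliardoEnergy_eq_zero (hs : MeasurableSet s) (hu : ∀ x ∈ s, u x = 0) (hp : p ≠ 0) :
    gagliardoEnergy μ s σ p u = 0 := by
  have hinner : ∀ x ∈ s, ∫⁻ y in s,
      ENNReal.ofReal (‖u y - u x‖ ^ p / ‖y - x‖ ^ (finrank ℝ E + σ * p)) ∂μ = 0 := fun x hx =>
    setLIntegral_eq_zero hs fun y hy => by simp [hu x hx, hu y hy, Real.zero_rpow hp]
  exact setLIntegral_eq_zero hs hinner

variable [BorelSpace E] [FiniteDimensional ℝ E] [μ.IsAddHaarMeasure]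

lemma gagliardoEnergy_le_near_add_far [NormedSpace ℝ F] (hs : IsOpen s) (hconv : Convex ℝ s)
    (hu : ContDiffOn ℝ 1 u s) (hM : ∀ x ∈ s, ‖u x‖ ≤ M) (hp : 1 ≤ p) (δ : ℝ) :
    gagliardoEnergy μ s σ p u ≤
      (∫⁻ h, radialKernel (Ioc 0 δ) ((1 - σ) * p) h ∂μ) * dirichletEnergy μ s p u +
        ENNReal.ofReal ((2 * M) ^ p) * (∫⁻ h, radialKernel (Ioi δ) (-(σ * p)) h ∂μ) * μ s := by
  set near : E → ℝ≥0∞ := radialKernel (Ioc 0 δ) ((1 - σ) * p)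
  set far : E → ℝ≥0∞ := fun h => ENNReal.ofReal ((2 * M) ^ p) * radialKernel (Ioi δ) (-(σ * p)) h
  set g : E → ℝ≥0∞ := s.indicator fun z => ENNReal.ofReal (‖fderiv ℝ u z‖ ^ p)
  have hfar : Measurable far := (measurable_radialKernel measurableSet_Ioi _).const_mul _
  have hg : Measurable g := by
    refine measurable_indicator_of_continuousOn ?_ hs.measurableSet
    exact ENNReal.continuous_ofReal.comp_continuousOn <|
      (hu.continuousOn_fderiv_of_isOpen hs le_rfl).norm.rpow_const fun _ _ =>
        .inr (zero_le_one.trans hp)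
  have : IsProbabilityMeasure (volume.restrict (Icc (0 : ℝ) 1)) := ⟨by simp⟩
  calc gagliardoEnergy μ s σ p u
      ≤ ∫⁻ x in s, ∫⁻ y in s,
          (near (y - x) * (∫⁻ t in Icc (0 : ℝ) 1, g (x + t • (y - x))) + far (y - x)) ∂μ ∂μ :=
        setLIntegral_mono' hs.measurableSet fun x hx => setLIntegral_mono' hs.measurableSet
          fun y hy => gagliardo_integrand_le_near_add_far hs hconv hu hM hp δ hx hy
    _ = (∫⁻ x in s, ∫⁻ y in s,
            near (y - x) * (∫⁻ t in Icc (0 : ℝ) 1, g (x + t • (y - x))) ∂μ ∂μ) +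
          ∫⁻ x in s, ∫⁻ y in s, far (y - x) ∂μ ∂μ := by
        have hmeas : Measurable fun z : E × E => far (z.2 - z.1) := hfar.comp (by fun_prop)
        rw [← lintegral_add_right _ hmeas.lintegral_prod_right']
        exact lintegral_congr fun x => lintegral_add_right _ (hfar.comp (by fun_prop))
    _ ≤ (∫⁻ x, ∫⁻ y, near (y - x) * (∫⁻ t in Icc (0 : ℝ) 1, g (x + t • (y - x))) ∂μ ∂μ) +
          (∫⁻ h, far h ∂μ) * μ s :=
        add_le_add
          ((setLIntegral_le_lintegral _ _).trans
            (lintegral_mono fun x => setLIntegral_le_lintegral _ _))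
          (setLIntegral_setLIntegral_comp_sub_le μ far s)
    _ = _ := by
        rw [lintegral_lintegral_mul_segment (measurable_radialKernel measurableSet_Ioc _) hg,
          lintegral_indicator hs.measurableSet, dirichletEnergy,
          lintegral_const_mul _ (measurable_radialKernel measurableSet_Ioi _)]

variable [Nontrivial E]

lemma gagliardoNirenbergConst_pos (s : Set E) (hp : 0 < p) (hσ₀ : 0 < σ) (hσ₁ : σ < 1) :
    0 < gagliardoNirenbergConst μ s σ p := by
  have : NeZero μ.toSphere := ⟨μ.toSphere_ne_zero⟩
  have hsphere : 0 < μ.toSphere.real univ := measureReal_univ_pos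
  have : 0 < 1 - σ := sub_pos.2 hσ₁
  unfold gagliardoNirenbergConst
  positivity

theorem statement9_general [NormedSpace ℝ F] (hs : IsOpen s) (hconv : Convex ℝ s) (hμs : μ s ≠ ∞)
    (hp : 1 ≤ p) (hσ₀ : 0 < σ) (hσ₁ : σ < 1) (hu : ContDiffOn ℝ 1 u s)
    (hM : ∀ x ∈ s, ‖u x‖ ≤ M) :
    gagliardoEnergy μ s σ p u ≤ ENNReal.ofReal (gagliardoNirenbergConst μ s σ p) *
      dirichletEnergy μ s p u ^ σ * ENNReal.ofReal (M ^ ((1 - σ) * p)) := by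
  have hp0 : 0 < p := one_pos.trans_le hp
  have : 0 < 1 - σ := sub_pos.2 hσ₁
  rcases le_or_gt M 0 with hM_nonpos | hM_pos
  · have hzero : ∀ x ∈ s, u x = 0 := fun x hx => norm_le_zero_iff.1 ((hM x hx).trans hM_nonpos)
    exact (gagliardoEnergy_eq_zero hs.measurableSet hzero hp0.ne').trans_le zero_le
  have : NeZero μ.toSphere := ⟨μ.toSphere_ne_zero⟩
  have hsphere : 0 < μ.toSphere.real univ := measureReal_univ_pos
  rw [mul_comm (1 - σ), Real.rpow_mul hM_pos.le]
  refine le_rpow_mul_rpow_of_forall_pos_le (by positivity) (by positivity) (by positivity) hσ₀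
    fun t ht => ?_
  have hδ : 0 < t ^ p⁻¹ := by positivity
  have hpow (q : ℝ) : (t ^ p⁻¹) ^ (q * p) = t ^ q := by
    rw [← Real.rpow_mul ht.le]
    congr 1
    field_simp
  refine (gagliardoEnergy_le_near_add_far hs hconv hu hM hp (t ^ p⁻¹)).trans_eq ?_
  rw [lintegral_radialKernel_Ioc μ (by positivity) hδ, lintegral_radialKernel_Ioi μ
    (by positivity) hδ, ← neg_mul, hpow, hpow, ← ofReal_measureReal hμs,
    ← ENNReal.ofReal_mul (by positivity), ← ENNReal.ofReal_mul (by positivity),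
    Real.mul_rpow zero_le_two hM_pos.le]
  congr 1
  · congr 2; ring
  · congr 1; ring

end Energy

/-- fractional Gagliardo–Nirenberg inequality on the unit ball:
`E^{1-1/p,p}(u) ≤ C (∫_{B^ℓ} ‖Du‖^p)^{(p-1)/p} ‖u‖_∞` for `C^1` maps `u : B̄^ℓ → ℝ^ν`. -/
theorem statement9 (l ν : ℕ) (hl : 1 ≤ l) (hν : 1 ≤ ν) (p : ℝ) (hp : 1 < p) :
    ∃ C : ℝ, 0 < C ∧
      ∀ u : EuclideanSpace ℝ (Fin l) → EuclideanSpace ℝ (Fin ν),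
        (∃ V : Set (EuclideanSpace ℝ (Fin l)), IsOpen V ∧
          closedBall (0 : EuclideanSpace ℝ (Fin l)) 1 ⊆ V ∧ ContDiffOn ℝ 1 u V) →
        (∫⁻ x in ball (0 : EuclideanSpace ℝ (Fin l)) 1, ∫⁻ y in ball (0 : EuclideanSpace ℝ (Fin l)) 1,
            ENNReal.ofReal (‖u y - u x‖ ^ p / ‖y - x‖ ^ ((l : ℝ) + p - 1)))
          ≤ ENNReal.ofReal C
            * (∫⁻ x in ball (0 : EuclideanSpace ℝ (Fin l)) 1,
                ENNReal.ofReal (‖fderiv ℝ u x‖ ^ p)) ^ ((p - 1) / p)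
            * ENNReal.ofReal (⨆ x : (closedBall (0 : EuclideanSpace ℝ (Fin l)) 1 : Set _), ‖u x‖) := by
  have : Nonempty (Fin l) := ⟨⟨0, hl⟩⟩
  have hp0 : 0 < p := one_pos.trans hp
  have hσ₀ : 0 < (p - 1) / p := div_pos (sub_pos.2 hp) hp0
  have hσ₁ : (p - 1) / p < 1 := (div_lt_one hp0).2 (sub_one_lt p)
  have horder : (p - 1) / p * p = p - 1 := div_mul_cancel₀ _ hp0.ne'
  have hsup : (1 - (p - 1) / p) * p = 1 := by rw [sub_mul, horder]; ring
  refine ⟨gagliardoNirenbergConst (E := EuclideanSpace ℝ (Fin l)) volume (ball 0 1) ((p - 1) / p) p,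
    gagliardoNirenbergConst_pos _ hp0 hσ₀ hσ₁, fun u ⟨V, _, hV, hu⟩ => ?_⟩
  have hGN := statement9_general (μ := volume) isOpen_ball (convex_ball 0 1)
    measure_ball_lt_top.ne hp.le hσ₀ hσ₁ (hu.mono (ball_subset_closedBall.trans hV)) fun x hx =>
      le_ciSup_set ((isCompact_closedBall _ _).bddAbove_image (hu.continuousOn.mono hV).norm)
        (ball_subset_closedBall hx)
  simpa only [gagliardoEnergy, dirichletEnergy, finrank_euclideanSpace_fin, horder, hsup,
    Real.rpow_one, add_sub_assoc] using hGN

end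
end
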